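/- Let ρ be a weight on L(G), let M ≥ 1 and w ∈ ℝ, and let p = 1. The following are equivalent: (i) for every t ≥ 0 the left translation T_t defines a bounded linear operator on L^1_ρ(L(G)), the family {T_t}_{t≥0} is a C₀-semigroup on L^1_ρ(L(G)), and ‖T_t‖ ≤ M e^{wt} for all t ≥ 0; (ii) for all i ∈ I, all t ≥ 0, and almost every s ∈ [0,1], one has ρ_i(s) ≤ M e^{wt} · inf_{j∈M_{n(t,s)}(i)} ρ_j(s+t−n(t,s)), where the infimum over the empty set is +∞. -/

import Mathlib

open MeasureTheory ENNReal Filter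

noncomputable section

variable {I : Type*}

/-- The `n`-fold iterate of the parent map `P : I → Option I` of a directed metric tree,
encoded on the set of edges `I`. -/
def pIter (P : I → Option I) : ℕ → I → Option I
  | 0, j => some j
  | n + 1, j => (P j).bind (pIter P n)

/-- `Mset P n i` is the set of edges reachable from the edge `i` in `n` steps,
i.e. `M_n(i) = {j | P^[n] j = some i}`; `Mset P 0 i = {i}`. -/
def Mset (P : I → Option I) (n : ℕ) (i : I) : Set I := {j | pIter P n j = some i}

/-- `nfl t s = ⌊s + t⌋ ∈ ℕ`. -/
def nfl (t s : ℝ) : ℕ := ⌊s + t⌋₊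

/-- The left translation `T_t` on families of functions on the edges:
`(T_t f)_i (s) = ∑_{j ∈ M_{n(t,s)}(i)} f_j (t + s - n(t,s))`. -/
def Tleft (P : I → Option I) (f : I → ℝ → ℝ) (t : ℝ) (i : I) (s : ℝ) : ℝ :=
  ∑' j : Mset P (nfl t s) i, f (j : I) (t + s - (nfl t s : ℝ))

/-- The `p`-th power of the norm of a family `f` in `L^p_ρ(L(G))`:
`‖f‖_{p,ρ}^p = ∑_{i ∈ I} ∫_0^1 |f_i(s)|^p ρ_i(s) ds`, with values in `[0,∞]`. -/
def pnorm (ρ : I → ℝ → ℝ) (p : ℝ) (f : I → ℝ → ℝ) : ℝ≥0∞ :=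
  ∑' i, ∫⁻ s in Set.Icc (0 : ℝ) 1, ENNReal.ofReal (|f i s| ^ p * ρ i s)

/-- Membership in `L^p_ρ(L(G))`: each component is (a.e.) measurable on `[0,1]` and the
`ℓ^p`-direct sum norm is finite. -/
def memLprho (ρ : I → ℝ → ℝ) (p : ℝ) (f : I → ℝ → ℝ) : Prop :=
  (∀ i, AEMeasurable (f i) (volume.restrict (Set.Icc (0 : ℝ) 1))) ∧ pnorm ρ p f < ⊤

/-- The norm `‖f‖_{p,ρ}` in `L^p_ρ(L(G))`, with values in `[0,∞]`. -/
def enorm' (ρ : I → ℝ → ℝ) (p : ℝ) (f : I → ℝ → ℝ) : ℝ≥0∞ := pnorm ρ p f ^ (1 / p)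

/-- The distance `‖f - g‖_{p,ρ}` in `L^p_ρ(L(G))`, with values in `[0,∞]`. -/
def pdist (ρ : I → ℝ → ℝ) (p : ℝ) (f g : I → ℝ → ℝ) : ℝ≥0∞ :=
  enorm' ρ p fun i s => f i s - g i s

/-- A weight on `L(G)`: a family of integrable functions on `[0,1]`, strictly positive a.e. -/
structure IsWeight (ρ : I → ℝ → ℝ) : Prop where
  integrable : ∀ i, IntegrableOn (ρ i) (Set.Icc (0 : ℝ) 1)
  pos : ∀ i, ∀ᵐ s ∂(volume.restrict (Set.Icc (0 : ℝ) 1)), 0 < ρ i s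

/-- The `1`-admissibility condition (everywhere on `[0,1]`) with constants `M, w`:
`ρ_i(s) ≤ M e^{wt} inf_{j ∈ M_{n(t,s)}(i)} ρ_j(s+t-n(t,s))`, the infimum (in `[0,∞]`)
over the empty set being `+∞`. -/
def Admissible1 (P : I → Option I) (ρ : I → ℝ → ℝ) (M w : ℝ) : Prop :=
  ∀ i, ∀ t ≥ (0 : ℝ), ∀ s ∈ Set.Icc (0 : ℝ) 1,
    ENNReal.ofReal (ρ i s) ≤ ENNReal.ofReal (M * Real.exp (w * t)) *
      ⨅ j : Mset P (nfl t s) i, ENNReal.ofReal (ρ (j : I) (s + t - (nfl t s : ℝ)))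

/-- The `p`-admissibility condition (`1 < p < ∞`, everywhere on `[0,1]`) with constants `M, w`:
`(∑_{j ∈ M_{n(t,s)}(i)} ρ_j(s+t-n(t,s))^{-1/(p-1)})^{p-1} ≤ M^p e^{pwt} / ρ_i(s)`,
the sum being taken in `[0,∞]`. -/
def AdmissibleP (P : I → Option I) (ρ : I → ℝ → ℝ) (p M w : ℝ) : Prop :=
  ∀ i, ∀ t ≥ (0 : ℝ), ∀ s ∈ Set.Icc (0 : ℝ) 1,
    (∑' j : Mset P (nfl t s) i,
        ENNReal.ofReal ((ρ (j : I) (s + t - (nfl t s : ℝ))) ^ (-(1 / (p - 1))))) ^ (p - 1)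
      ≤ ENNReal.ofReal (M ^ p * Real.exp (p * w * t) / ρ i s)

/-- `p`-admissibility, `1 ≤ p < ∞`. -/
def Admissible (P : I → Option I) (ρ : I → ℝ → ℝ) (p M w : ℝ) : Prop :=
  (p = 1 → Admissible1 P ρ M w) ∧ (1 < p → AdmissibleP P ρ p M w)

/-- The family of left translations `{T_t}_{t ≥ 0}` consists of bounded (linear) operators on
`L^p_ρ(L(G))` with `‖T_t‖ ≤ M e^{wt}`, and is a `C₀`-semigroup there: `T_0 = Id`,
`T_{t+u} = T_t ∘ T_u`, and `t ↦ T_t f` is continuous on `[0,∞)` for every `f`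
(identities and continuity taken in the `L^p_ρ`-(semi)metric). -/
def C0SemigroupBound (P : I → Option I) (ρ : I → ℝ → ℝ) (p M w : ℝ) : Prop :=
  (∀ t ≥ (0 : ℝ), ∀ f, memLprho ρ p f → memLprho ρ p (Tleft P f t)) ∧
  (∀ t ≥ (0 : ℝ), ∀ f, memLprho ρ p f →
      enorm' ρ p (Tleft P f t) ≤ ENNReal.ofReal (M * Real.exp (w * t)) * enorm' ρ p f) ∧
  (∀ f, memLprho ρ p f → pdist ρ p (Tleft P f 0) f = 0) ∧
  (∀ t ≥ (0 : ℝ), ∀ u ≥ (0 : ℝ), ∀ f, memLprho ρ p f →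
      pdist ρ p (Tleft P f (t + u)) (Tleft P (Tleft P f u) t) = 0) ∧
  (∀ f, memLprho ρ p f → ∀ t ≥ (0 : ℝ),
      Filter.Tendsto (fun u => pdist ρ p (Tleft P f u) (Tleft P f t))
        (nhdsWithin t (Set.Ici 0)) (nhds 0))

abbrev mu01 : Measure ℝ := volume.restrict (Set.Icc (0 : ℝ) 1)

lemma fract_mp (t : ℝ) : MeasurePreserving (fun s => Int.fract (t + s)) mu01 mu01 := by
  have hm : Measurable (fun s : ℝ => Int.fract (t + s)) := measurable_fract.comp (measurable_const_add t)
  refine ⟨hm, ?_⟩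
  ext A hA
  rw [Measure.map_apply hm hA]
  have hIoc : mu01 = volume.restrict (Set.Ioc (0 : ℝ) 1) := by
    rw [mu01, restrict_Ioc_eq_restrict_Icc]
  let g : ℝ → ℝ≥0∞ := fun x => A.indicator 1 (Int.fract x)
  have h1 : mu01 ((fun s : ℝ => Int.fract (t + s)) ⁻¹' A) = ∫⁻ s in Set.Ioc (0 : ℝ) 1, g (t + s) := by
    rw [hIoc, ← lintegral_indicator_one (hm hA)]
    rfl
  have h2 : ∫⁻ s in Set.Ioc (0 : ℝ) 1, g (t + s) = ∫⁻ s in Set.Ioc t (t + 1), g s := by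
    have := (measurePreserving_add_left (volume : Measure ℝ) t).setLIntegral_comp_preimage_emb
      (measurableEmbedding_addLeft t) g (Set.Ioc t (t + 1))
    rw [← this]
    congr 2
    ext x; simp
  have h3 : ∫⁻ s in Set.Ioc t (t + 1), g s = ∫⁻ s in Set.Ioc (0 : ℝ) (0 + 1), g s := by
    refine (isAddFundamentalDomain_Ioc one_pos t volume).setLIntegral_eq
      (isAddFundamentalDomain_Ioc one_pos 0 volume) g ?_
    rintro ⟨y, hy⟩ x
    obtain ⟨k, rfl⟩ := AddSubgroup.mem_zmultiples_iff.1 hy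
    simp only [g, AddSubgroup.mk_vadd, vadd_eq_add]
    simp
  rw [h1, h2, h3, zero_add, ← restrict_Ioo_eq_restrict_Ioc, mu01, ← restrict_Ioo_eq_restrict_Icc,
    ← lintegral_indicator_one hA]
  refine setLIntegral_congr_fun measurableSet_Ioo ?_
  intro x hx
  simp only [g]
  rw [Int.fract_eq_self.2 ⟨hx.1.le, hx.2⟩]

lemma nfl_cast {t s : ℝ} (h : 0 ≤ s + t) : (t + s - (nfl t s : ℝ)) = Int.fract (t + s) := by
  rw [nfl, natCast_floor_eq_intCast_floor h, add_comm t s]; rfl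

lemma ae_Ico : ∀ᵐ s ∂mu01, s ∈ Set.Ico (0 : ℝ) 1 := by
  rw [mu01, ← restrict_Ico_eq_restrict_Icc]
  exact ae_restrict_mem measurableSet_Ico

lemma measurable_nfl (t : ℝ) : Measurable (nfl t) :=
  Nat.measurable_floor.comp (measurable_id.add_const t)

/-- summand of the left translation -/
def trm {E : Type*} [Zero E] (P : I → Option I) (f : I → ℝ → E) (t : ℝ) (i : I) (s : ℝ) (j : I) : E :=
  (Mset P (nfl t s) i).indicator (fun j => f j (t + s - (nfl t s : ℝ))) j

lemma Tleft_eq (P : I → Option I) (f : I → ℝ → ℝ) (t : ℝ) (i : I) (s : ℝ) :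
    Tleft P f t i s = ∑' j, trm P f t i s j := by
  unfold Tleft trm
  exact tsum_subtype (Mset P (nfl t s) i) (fun j => f j (t + s - (nfl t s : ℝ)))

lemma enorm_trm (P : I → Option I) (f : I → ℝ → ℝ) (t : ℝ) (i : I) (s : ℝ) (j : I) :
    ‖trm P f t i s j‖ₑ = trm P (fun i s => ‖f i s‖ₑ) t i s j := by
  unfold trm
  exact enorm_indicator_eq_indicator_enorm ..

lemma aem_trm {E : Type*} [Zero E] [MeasurableSpace E] (P : I → Option I) (f : I → ℝ → E)
    (t : ℝ) (ht : 0 ≤ t) (i j : I)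
    (hf : AEMeasurable (f j) mu01) : AEMeasurable (fun s => trm P f t i s j) mu01 := by
  have h1 : AEMeasurable (fun s => f j (Int.fract (t + s))) mu01 :=
    hf.comp_quasiMeasurePreserving (fract_mp t).quasiMeasurePreserving
  have h2 : MeasurableSet {s : ℝ | j ∈ Mset P (nfl t s) i} :=
    measurable_nfl t (MeasurableSet.of_discrete (s := {n | j ∈ Mset P n i}))
  refine (h1.indicator h2).congr ?_
  filter_upwards [ae_Ico] with s hs
  simp only [trm, Set.indicator, Set.mem_ofPred_eq]
  rw [← nfl_cast (by linarith [hs.1])]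

lemma tsum_trm_le (P : I → Option I) (f : I → ℝ → ℝ≥0∞) (t : ℝ) (s : ℝ) (j : I) :
    ∑' i, trm P f t i s j ≤ f j (t + s - (nfl t s : ℝ)) := by
  unfold trm
  cases h : pIter P (nfl t s) j with
  | none => simp [Mset, h]
  | some i0 =>
    rw [tsum_eq_single i0]
    · exact Set.indicator_le_self' (by simp) _
    · intro i hi
      apply Set.indicator_of_notMem
      simp [Mset, h, hi.symm]

lemma transport [Countable I] (P : I → Option I) (f : I → ℝ → ℝ≥0∞) (t : ℝ) (ht : 0 ≤ t)
    (hf : ∀ i, AEMeasurable (f i) mu01) :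
    ∑' i, ∫⁻ s, ∑' j, trm P f t i s j ∂mu01 ≤ ∑' j, ∫⁻ s, f j s ∂mu01 := by
  calc ∑' i, ∫⁻ s, ∑' j, trm P f t i s j ∂mu01
      = ∑' i, ∑' j, ∫⁻ s, trm P f t i s j ∂mu01 := by
        congr 1; ext i
        exact lintegral_tsum fun j => aem_trm P f t ht i j (hf j)
    _ = ∑' j, ∑' i, ∫⁻ s, trm P f t i s j ∂mu01 := ENNReal.tsum_comm
    _ = ∑' j, ∫⁻ s, ∑' i, trm P f t i s j ∂mu01 := by
        congr 1; ext j
        exact (lintegral_tsum fun i => aem_trm P f t ht i j (hf j)).symm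
    _ ≤ ∑' j, ∫⁻ s, f j (Int.fract (t + s)) ∂mu01 := by
        refine ENNReal.tsum_le_tsum fun j => lintegral_mono_ae ?_
        filter_upwards [ae_Ico] with s hs
        rw [← nfl_cast (by linarith [hs.1])]
        exact tsum_trm_le P f t s j
    _ = ∑' j, ∫⁻ s, f j s ∂mu01 := by
        congr 1; ext j
        conv_rhs => rw [← (fract_mp t).map_eq]
        rw [lintegral_map' _ (fract_mp t).aemeasurable]
        rw [(fract_mp t).map_eq]; exact hf j

/-- the L1 norm -/
def N1 (ρ : I → ℝ → ℝ) (f : I → ℝ → ℝ) : ℝ≥0∞ :=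
  ∑' i, ∫⁻ s, ‖f i s‖ₑ * ENNReal.ofReal (ρ i s) ∂mu01

lemma pnorm_eq (ρ f : I → ℝ → ℝ) : pnorm ρ 1 f = N1 ρ f := by
  unfold pnorm N1
  simp only [Real.rpow_one]
  congr 1; ext i; congr 1; ext s
  rw [ENNReal.ofReal_mul (abs_nonneg _), Real.enorm_eq_ofReal_abs]

lemma enorm'_eq (ρ f : I → ℝ → ℝ) : enorm' ρ 1 f = N1 ρ f := by
  simp [enorm', pnorm_eq]

lemma pdist_eq (ρ f g : I → ℝ → ℝ) : pdist ρ 1 f g = N1 ρ (fun i s => f i s - g i s) := by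
  simp [pdist, enorm'_eq]

lemma mem_iff (ρ f : I → ℝ → ℝ) :
    memLprho ρ 1 f ↔ (∀ i, AEMeasurable (f i) mu01) ∧ N1 ρ f < ⊤ := by
  simp [memLprho, pnorm_eq]

lemma IsWeight.aem {ρ : I → ℝ → ℝ} (hρ : IsWeight ρ) (i : I) :
    AEMeasurable (fun s => ENNReal.ofReal (ρ i s)) mu01 :=
  (hρ.integrable i).aemeasurable.ennreal_ofReal

lemma IsWeight.lint {ρ : I → ℝ → ℝ} (hρ : IsWeight ρ) (i : I) :
    ∫⁻ s, ENNReal.ofReal (ρ i s) ∂mu01 < ⊤ :=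
  (hρ.integrable i).lintegral_lt_top

/-- condition (ii) at time t -/
def Cond (P : I → Option I) (ρ : I → ℝ → ℝ) (M w t : ℝ) : Prop :=
  ∀ i, ∀ᵐ s ∂mu01,
        ENNReal.ofReal (ρ i s) ≤ ENNReal.ofReal (M * Real.exp (w * t)) *
          ⨅ j : Mset P (nfl t s) i, ENNReal.ofReal (ρ (j : I) (s + t - (nfl t s : ℝ)))

lemma bound_abs [Countable I] {P : I → Option I} {ρ : I → ℝ → ℝ} (hρ : IsWeight ρ) {M w t : ℝ}
    (ht : 0 ≤ t) (hc : Cond P ρ M w t) {f : I → ℝ → ℝ}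
    (hf : ∀ i, AEMeasurable (f i) mu01) :
    ∑' i, ∫⁻ s, (∑' j, ‖trm P f t i s j‖ₑ) * ENNReal.ofReal (ρ i s) ∂mu01
      ≤ ENNReal.ofReal (M * Real.exp (w * t)) * N1 ρ f := by
  set C := ENNReal.ofReal (M * Real.exp (w * t))
  let g : I → ℝ → ℝ≥0∞ := fun j s => C * (‖f j s‖ₑ * ENNReal.ofReal (ρ j s))
  have hg0 : ∀ i, AEMeasurable (fun s => ‖f i s‖ₑ * ENNReal.ofReal (ρ i s)) mu01 := fun i =>
    (hf i).enorm.mul (hρ.aem i)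
  have hg : ∀ i, AEMeasurable (g i) mu01 := fun i => (hg0 i).const_mul C
  calc ∑' i, ∫⁻ s, (∑' j, ‖trm P f t i s j‖ₑ) * ENNReal.ofReal (ρ i s) ∂mu01
      ≤ ∑' i, ∫⁻ s, ∑' j, trm P g t i s j ∂mu01 := by
        refine ENNReal.tsum_le_tsum fun i => lintegral_mono_ae ?_
        filter_upwards [hc i] with s hs
        rw [← ENNReal.tsum_mul_right]
        refine ENNReal.tsum_le_tsum fun j => ?_
        rw [enorm_trm]
        unfold trm
        by_cases hj : j ∈ Mset P (nfl t s) i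
        · simp only [Set.indicator_of_mem hj, g]
          rw [mul_left_comm]
          gcongr
          refine hs.trans ?_
          gcongr
          rw [add_comm t s]
          exact iInf_le (fun j : Mset P (nfl t s) i => ENNReal.ofReal (ρ (j : I) (s + t - (nfl t s : ℝ)))) ⟨j, hj⟩
        · simp [Set.indicator_of_notMem hj]
    _ ≤ ∑' j, ∫⁻ s, g j s ∂mu01 := transport P g t ht hg
    _ = C * N1 ρ f := by
        simp only [g, N1]
        rw [← ENNReal.tsum_mul_left]
        congr 1; ext i
        exact lintegral_const_mul'' _ (hg0 i)

lemma bound_T [Countable I] {P : I → Option I} {ρ : I → ℝ → ℝ} (hρ : IsWeight ρ) {M w t : ℝ}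
    (ht : 0 ≤ t) (hc : Cond P ρ M w t) {f : I → ℝ → ℝ}
    (hf : ∀ i, AEMeasurable (f i) mu01) :
    N1 ρ (Tleft P f t) ≤ ENNReal.ofReal (M * Real.exp (w * t)) * N1 ρ f := by
  refine le_trans ?_ (bound_abs hρ ht hc hf)
  refine ENNReal.tsum_le_tsum fun i => lintegral_mono fun s => ?_
  simp only [Tleft_eq]
  gcongr
  exact enorm_tsum_le_tsum_enorm

lemma summ_T [Countable I] {P : I → Option I} {ρ : I → ℝ → ℝ} (hρ : IsWeight ρ) {M w t : ℝ}
    (ht : 0 ≤ t) (hc : Cond P ρ M w t) {f : I → ℝ → ℝ}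
    (hf : memLprho ρ 1 f) (i : I) : ∀ᵐ s ∂mu01, Summable (trm P f t i s) := by
  rw [mem_iff] at hf
  have h1 := bound_abs hρ ht hc hf.1
  have h2 : ∫⁻ s, (∑' j, ‖trm P f t i s j‖ₑ) * ENNReal.ofReal (ρ i s) ∂mu01 ≠ ⊤ := by
    refine ne_top_of_le_ne_top ?_ ((ENNReal.le_tsum i).trans h1)
    exact ENNReal.mul_ne_top ENNReal.ofReal_ne_top hf.2.ne
  have h3 : AEMeasurable (fun s => (∑' j, ‖trm P f t i s j‖ₑ) * ENNReal.ofReal (ρ i s)) mu01 := by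
    refine AEMeasurable.mul (AEMeasurable.tsum fun j => ?_) (hρ.aem i)
    exact (aem_trm P f t ht i j (hf.1 j)).enorm
  filter_upwards [ae_lt_top' h3 h2, hρ.pos i] with s hs hp
  apply Summable.of_enorm
  intro h
  rw [h, ENNReal.top_mul (by simpa using hp)] at hs
  exact lt_irrefl _ hs

lemma mem_T [Countable I] {P : I → Option I} {ρ : I → ℝ → ℝ} (hρ : IsWeight ρ) {M w t : ℝ}
    (ht : 0 ≤ t) (hc : Cond P ρ M w t) {f : I → ℝ → ℝ}
    (hf : memLprho ρ 1 f) : memLprho ρ 1 (Tleft P f t) := by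
  have hs := summ_T hρ ht hc hf
  rw [mem_iff] at hf ⊢
  refine ⟨fun i => ?_, (bound_T hρ ht hc hf.1).trans_lt
    (ENNReal.mul_lt_top ENNReal.ofReal_lt_top hf.2)⟩
  refine aemeasurable_of_tendsto_metrizable_ae (atTop : Filter (Finset I))
    (f := fun F s => ∑ j ∈ F, trm P f t i s j) (fun F => ?_) ?_
  · exact Finset.aemeasurable_fun_sum _ fun j _ => aem_trm P f t ht i j (hf.1 j)
  · filter_upwards [hs i] with s h
    rw [Tleft_eq]
    exact h.hasSum

lemma pIter_add (P : I → Option I) (n m : ℕ) (k : I) :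
    pIter P (m + n) k = (pIter P m k).bind (pIter P n) := by
  induction m generalizing k with
  | zero => simp [pIter]
  | succ m ih =>
    rw [Nat.add_right_comm, pIter, pIter]
    cases P k with
    | none => rfl
    | some a => simp [ih]

lemma tsum_comp (P : I → Option I) (n m : ℕ) (i : I) (F : I → ℝ)
    (h : Summable ((Mset P (n + m) i).indicator F)) :
    ∑' k, (Mset P (n + m) i).indicator F k =
      ∑' j, (Mset P n i).indicator (fun j => ∑' k, (Mset P m j).indicator F k) j := by
  have h1 := (h.hasSum.tsum_fiberwise (pIter P m)).tsum_eq
  rw [← h1]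
  have key : ∀ (c : Option I), ∑' b : (pIter P m ⁻¹' {c}), (Mset P (n + m) i).indicator F b =
      ∑' b, (pIter P m ⁻¹' {c}).indicator ((Mset P (n + m) i).indicator F) b :=
    fun c => tsum_subtype _ _
  simp only [key]
  rw [← (Option.some_injective I).tsum_eq (f := fun c : Option I =>
    ∑' b, (pIter P m ⁻¹' {c}).indicator ((Mset P (n + m) i).indicator F) b)]
  · congr 1; ext j
    by_cases hj : j ∈ Mset P n i
    · rw [Set.indicator_of_mem hj]
      congr 1; ext b
      by_cases hb : pIter P m b = some j
      · have hb' : b ∈ Mset P (n + m) i := by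
          have hj' : pIter P n j = some i := hj
          simp [Mset, add_comm n m, pIter_add, hb, hj']
        simp [Set.indicator, Mset, hb] at hb' ⊢
        simp [hb']
      · simp [Set.indicator, Mset, hb]
    · rw [Set.indicator_of_notMem hj]
      convert tsum_zero with b
      by_cases hb : pIter P m b = some j
      · have hb' : b ∉ Mset P (n + m) i := by
          have hj' : ¬ pIter P n j = some i := hj
          simp [Mset, add_comm n m, pIter_add, hb, hj']
        rw [Set.indicator_apply_eq_zero]
        exact fun _ => Set.indicator_of_notMem hb' _
      · simp [Set.indicator, hb]
  · intro c hc
    cases c with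
    | some a => simp
    | none =>
      exfalso; apply hc
      convert tsum_zero with b
      rw [Set.indicator_apply_eq_zero]
      intro hb
      have hb1 : pIter P m b = none := hb
      apply Set.indicator_of_notMem
      simp [Mset, add_comm n m, pIter_add, hb1]

lemma nfl_add {t u s : ℝ} (ht : 0 ≤ t) (hu : 0 ≤ u) (hs : 0 ≤ s) :
    nfl (t + u) s = nfl t s + nfl u (t + s - nfl t s) := by
  unfold nfl
  have h1 : (⌊s + t⌋₊ : ℝ) ≤ s + t := Nat.floor_le (by linarith)
  rw [add_comm ⌊s + t⌋₊, ← Nat.floor_add_natCast (by linarith)]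
  congr 1; ring

lemma T_add [Countable I] {P : I → Option I} {ρ : I → ℝ → ℝ} (hρ : IsWeight ρ) {M w t u : ℝ}
    (ht : 0 ≤ t) (hu : 0 ≤ u) (hc : Cond P ρ M w (t + u)) {f : I → ℝ → ℝ}
    (hf : memLprho ρ 1 f) (i : I) :
    ∀ᵐ s ∂mu01, Tleft P f (t + u) i s = Tleft P (Tleft P f u) t i s := by
  filter_upwards [summ_T hρ (by positivity) hc hf i, ae_Ico] with s hs hI
  rw [Tleft_eq, Tleft_eq]
  unfold trm at hs ⊢
  simp only [Tleft_eq]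
  unfold trm
  have e := nfl_add ht hu hI.1
  set n := nfl t s
  set m := nfl u (t + s - n)
  rw [e] at hs ⊢
  have := tsum_comp P n m i _ hs
  rw [this]
  have e2 : t + u + s - ((n + m : ℕ) : ℝ) = u + (t + s - n) - m := by push_cast; ring
  rw [e2]

lemma T_zero (P : I → Option I) (f : I → ℝ → ℝ) (i : I) :
    ∀ᵐ s ∂mu01, Tleft P f 0 i s = f i s := by
  filter_upwards [ae_Ico] with s hs
  have : nfl 0 s = 0 := by
    unfold nfl; rw [Nat.floor_eq_zero]; simpa using hs.2
  rw [Tleft_eq, tsum_eq_single i]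
  · unfold trm
    rw [this, Set.indicator_of_mem (by simp [Mset, pIter])]
    simp
  · intro j hj
    unfold trm
    rw [this, Set.indicator_of_notMem (by simpa [Mset, pIter] using hj)]

lemma T_sub [Countable I] {P : I → Option I} {ρ : I → ℝ → ℝ} (hρ : IsWeight ρ) {M w t : ℝ}
    (ht : 0 ≤ t) (hc : Cond P ρ M w t) {f g : I → ℝ → ℝ}
    (hf : memLprho ρ 1 f) (hg : memLprho ρ 1 g) (i : I) :
    ∀ᵐ s ∂mu01, Tleft P (fun i s => f i s - g i s) t i s = Tleft P f t i s - Tleft P g t i s := by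
  filter_upwards [summ_T hρ ht hc hf i, summ_T hρ ht hc hg i] with s h1 h2
  rw [Tleft_eq, Tleft_eq, Tleft_eq, ← h1.tsum_sub h2]
  congr 1; ext j
  unfold trm
  by_cases hj : j ∈ Mset P (nfl t s) i <;> simp [hj]

lemma N1_congr {ρ f g : I → ℝ → ℝ} (h : ∀ i, ∀ᵐ s ∂mu01, f i s = g i s) : N1 ρ f = N1 ρ g := by
  unfold N1
  congr 1; ext i
  refine lintegral_congr_ae ?_
  filter_upwards [h i] with s hs
  rw [hs]

lemma N1_zero {ρ f : I → ℝ → ℝ} (h : ∀ i, ∀ᵐ s ∂mu01, f i s = 0) : N1 ρ f = 0 := by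
  rw [N1_congr (g := fun _ _ => 0) h]; simp [N1]

lemma N1_add_le {ρ : I → ℝ → ℝ} (hρ : IsWeight ρ) {f g h : I → ℝ → ℝ}
    (hf : ∀ i, AEMeasurable (f i) mu01)
    (hh : ∀ i s, h i s = f i s + g i s) : N1 ρ h ≤ N1 ρ f + N1 ρ g := by
  unfold N1
  rw [← ENNReal.tsum_add]
  refine ENNReal.tsum_le_tsum fun i => ?_
  have hm : AEMeasurable (fun s => ‖f i s‖ₑ * ENNReal.ofReal (ρ i s)) mu01 :=
    (hf i).enorm.mul (hρ.aem i)
  rw [← lintegral_add_left' hm]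
  refine lintegral_mono fun s => ?_
  simp only
  rw [← add_mul, hh]
  gcongr
  exact enorm_add_le _ _

lemma N1_sub_comm (ρ f g : I → ℝ → ℝ) :
    N1 ρ (fun i s => f i s - g i s) = N1 ρ (fun i s => g i s - f i s) := by
  unfold N1
  congr 1; ext i; congr 1; ext s
  rw [enorm_sub_rev]

lemma mem_sub {ρ : I → ℝ → ℝ} (hρ : IsWeight ρ) {f g : I → ℝ → ℝ}
    (hf : memLprho ρ 1 f) (hg : memLprho ρ 1 g) : memLprho ρ 1 (fun i s => f i s - g i s) := by
  rw [mem_iff] at *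
  refine ⟨fun i => (hf.1 i).sub (hg.1 i), ?_⟩
  refine (N1_add_le hρ (g := fun i s => - g i s) hf.1 (fun i s => sub_eq_add_neg _ _)).trans_lt ?_
  refine ENNReal.add_lt_top.2 ⟨hf.2, ?_⟩
  simpa [N1] using hg.2


lemma T_small (P : I → Option I) (f : I → ℝ → ℝ) {i : I} {h s : ℝ} (hs : s + h < 1) :
    Tleft P f h i s = f i (h + s) := by
  have : nfl h s = 0 := by
    unfold nfl; rw [Nat.floor_eq_zero]; exact hs
  rw [Tleft_eq, tsum_eq_single i]
  · unfold trm
    rw [this, Set.indicator_of_mem (by simp [Mset, pIter])]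
    simp
  · intro j hj
    unfold trm
    rw [this, Set.indicator_of_notMem (by simpa [Mset, pIter] using hj)]

lemma cont_simple {P : I → Option I} {ρ : I → ℝ → ℝ} (hρ : IsWeight ρ)
    {g : I → ℝ → ℝ} (F : Finset I) (hg0 : ∀ i ∉ F, ∀ s, g i s = 0) (hgc : ∀ i, Continuous (g i))
    (B : I → ℝ) (hB : ∀ i s, ‖g i s‖ ≤ B i) :
    Tendsto (fun h => N1 ρ (fun i s => Tleft P g h i s - g i s))
      (nhdsWithin 0 (Set.Ici 0)) (nhds 0) := by
  classical
  let F' : Finset I := F ∪ (F.image P).preimage some (Option.some_injective I).injOn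
  have hB0 : ∀ i, 0 ≤ B i := fun i => (norm_nonneg _).trans (hB i 0)
  have hT : ∀ h i s, Tleft P g h i s = ∑ j ∈ F, trm P g h i s j := by
    intro h i s
    rw [Tleft_eq]
    refine tsum_eq_sum fun j hj => ?_
    unfold trm
    rw [Set.indicator_apply_eq_zero]
    exact fun _ => hg0 j hj _
  have hTB : ∀ h i s, ‖Tleft P g h i s‖ ≤ ∑ j ∈ F, B j := by
    intro h i s
    rw [hT]
    refine norm_sum_le_of_le _ fun j _ => ?_
    unfold trm
    exact (norm_indicator_le_norm_self _ _).trans (hB j _)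
  have hT0 : ∀ h, 0 ≤ h → h < 1 → ∀ i ∉ F', ∀ s ∈ Set.Ico (0 : ℝ) 1, Tleft P g h i s = 0 := by
    intro h h0 h1 i hi s hs
    simp only [F', Finset.mem_union, Finset.mem_preimage, Finset.mem_image, not_or, not_exists,
      not_and] at hi
    rw [hT]
    refine Finset.sum_eq_zero fun j hj => ?_
    unfold trm
    apply Set.indicator_of_notMem
    have hn : nfl h s < 2 := by
      unfold nfl
      rw [Nat.floor_lt (by linarith [hs.1])]
      push_cast; linarith [hs.2]
    have hn' : nfl h s = 0 ∨ nfl h s = 1 := by omega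
    rcases hn' with e | e
    · rw [e]
      simp only [Mset, pIter, Set.mem_ofPred_eq, Option.some.injEq]
      rintro rfl
      exact hi.1 hj
    · rw [e]
      have := hi.2 j hj
      simp only [Mset, pIter, Set.mem_ofPred_eq]
      cases hp : P j with
      | none => simp
      | some a => 
        rw [hp] at this
        simpa [pIter] using this
  have hev : ∀ᶠ h in nhdsWithin (0 : ℝ) (Set.Ici 0),
      ∑ i ∈ F', ∫⁻ s, ‖Tleft P g h i s - g i s‖ₑ * ENNReal.ofReal (ρ i s) ∂mu01 =
      N1 ρ (fun i s => Tleft P g h i s - g i s) := by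
    filter_upwards [self_mem_nhdsWithin, mem_nhdsWithin_of_mem_nhds (Iio_mem_nhds one_pos)]
      with h h0 h1
    unfold N1
    symm
    refine tsum_eq_sum fun i hi => ?_
    rw [lintegral_congr_ae (g := fun _ => 0)]
    · simp
    · filter_upwards [ae_Ico] with s hs
      rw [hT0 h h0 h1 i hi s hs, hg0 i (fun h => hi (Finset.mem_union_left _ h))]
      simp
  refine Tendsto.congr' hev ?_
  rw [show (0 : ℝ≥0∞) = ∑ i ∈ F', 0 by simp]
  refine tendsto_finsetSum _ fun i _ => ?_
  rw [show (0 : ℝ≥0∞) = ∫⁻ s, 0 ∂mu01 by simp]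
  refine tendsto_lintegral_filter_of_dominated_convergence'
    (fun s => ENNReal.ofReal ((∑ j ∈ F, B j) + B i) * ENNReal.ofReal (ρ i s)) ?_ ?_ ?_ ?_
  · filter_upwards [self_mem_nhdsWithin] with h h0
    refine AEMeasurable.mul (AEMeasurable.enorm ?_) (hρ.aem i)
    refine AEMeasurable.sub ?_ (hgc i).aemeasurable
    have hTe : Tleft P g h i = fun s => ∑ j ∈ F, trm P g h i s j := funext (hT h i)
    rw [hTe]
    exact Finset.aemeasurable_fun_sum _ fun j _ => aem_trm P g h h0 i j (hgc j).aemeasurable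
  · refine Eventually.of_forall fun h => ae_of_all _ fun s => ?_
    gcongr
    rw [← ofReal_norm]
    apply ENNReal.ofReal_le_ofReal
    exact (norm_sub_le _ _).trans (add_le_add (hTB h i s) (hB i s))
  · rw [lintegral_const_mul'' _ (hρ.aem i)]
    exact ENNReal.mul_ne_top ENNReal.ofReal_ne_top (hρ.lint i).ne
  · filter_upwards [ae_Ico] with s hs
    have hlim : Tendsto (fun h => Tleft P g h i s - g i s) (nhdsWithin 0 (Set.Ici 0)) (nhds 0) := by
      have hc : Tendsto (fun h => g i (h + s) - g i s) (nhdsWithin 0 (Set.Ici 0)) (nhds 0) := by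
        have hc' : Continuous (fun h => g i (h + s) - g i s) := by
          have := hgc i
          fun_prop
        have := hc'.tendsto 0
        simp only [zero_add, sub_self] at this
        exact this.mono_left nhdsWithin_le_nhds
      refine hc.congr' ?_
      filter_upwards [mem_nhdsWithin_of_mem_nhds (Iio_mem_nhds (show (0 : ℝ) < 1 - s by linarith [hs.2]))]
        with h hh
      rw [T_small]
      have : h < 1 - s := hh
      linarith
    have h2 := hlim.enorm
    rw [enorm_zero] at h2
    have h3 := ENNReal.Tendsto.mul_const (b := ENNReal.ofReal (ρ i s)) h2 (Or.inr ENNReal.ofReal_ne_top)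
    simpa using h3

lemma approx [Countable I] {ρ : I → ℝ → ℝ} (hρ : IsWeight ρ) {f : I → ℝ → ℝ}
    (hf : memLprho ρ 1 f) {ε : ℝ≥0∞} (hε : ε ≠ 0) :
    ∃ (g : I → ℝ → ℝ) (F : Finset I) (B : I → ℝ), (∀ i ∉ F, ∀ s, g i s = 0) ∧
      (∀ i, Continuous (g i)) ∧ (∀ i s, ‖g i s‖ ≤ B i) ∧
      N1 ρ (fun i s => f i s - g i s) ≤ ε := by
  classical
  rw [mem_iff] at hf
  have hε2 : ε / 2 ≠ 0 := (ENNReal.half_pos hε).ne'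
  obtain ⟨δ, hδ, hδs⟩ := ENNReal.exists_pos_sum_of_countable' hε2 I
  have hN := hf.2.ne
  unfold N1 at hN
  obtain ⟨F, hF⟩ := ((tendsto_order.1 (ENNReal.tendsto_tsum_compl_atTop_zero hN)).2 _
    (pos_iff_ne_zero.2 hε2)).exists
  have hex : ∀ i, ∃ g : ℝ → ℝ, Continuous g ∧ (∃ B, ∀ s, ‖g s‖ ≤ B) ∧
      ∫⁻ s, ‖f i s - g s‖ₑ * ENNReal.ofReal (ρ i s) ∂mu01 ≤ δ i := by
    intro i
    let ν := mu01.withDensity (fun s => ENNReal.ofReal (ρ i s))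
    have : IsFiniteMeasure ν := isFiniteMeasure_withDensity (hρ.lint i).ne
    have hac : ν ≪ mu01 := withDensity_absolutelyContinuous _ _
    have hint : Integrable (f i) ν := by
      refine ⟨((hf.1 i).mono_ac hac).aestronglyMeasurable, ?_⟩
      rw [HasFiniteIntegral, lintegral_withDensity_eq_lintegral_mul₀ (hρ.aem i) (hf.1 i).enorm]
      simp only [Pi.mul_apply]
      refine lt_of_le_of_lt ?_ hf.2
      refine le_trans (le_of_eq ?_) (ENNReal.le_tsum i)
      congr 1; ext s; rw [mul_comm]
    obtain ⟨g, hgs, hgi, hgc, -⟩ := hint.exists_hasCompactSupport_lintegral_sub_le (hδ i).ne'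
    refine ⟨g, hgc, hgs.exists_bound_of_continuous hgc, ?_⟩
    have hm : AEMeasurable (fun s => ‖f i s - g s‖ₑ) mu01 :=
      ((hf.1 i).sub hgc.aemeasurable).enorm
    rw [lintegral_withDensity_eq_lintegral_mul₀ (hρ.aem i) hm] at hgi
    refine le_trans (le_of_eq ?_) hgi
    congr 1; ext s; simp [mul_comm]
  choose g hgc hgb hgi using hex
  choose B hB using hgb
  refine ⟨fun i => if i ∈ F then g i else 0, F, B, ?_, ?_, ?_, ?_⟩
  · intro i hi s; simp [hi]
  · intro i
    by_cases hi : i ∈ F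
    · simp only [hi, if_true]; exact hgc i
    · simp only [hi, if_false]; exact continuous_const
  · intro i s
    by_cases hi : i ∈ F
    · simp only [hi, if_true]; exact hB i s
    · simp only [hi, if_false, Pi.zero_apply, norm_zero]; exact (norm_nonneg _).trans (hB i s)
  · let c : I → ℝ≥0∞ := fun i => ∫⁻ s, ‖f i s‖ₑ * ENNReal.ofReal (ρ i s) ∂mu01
    have hc : ∑' i, ({i | i ∉ F} : Set I).indicator c i < ε / 2 := by
      rw [← tsum_subtype]; exact hF
    calc _ ≤ ∑' i, (δ i + ({i | i ∉ F} : Set I).indicator c i) := by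
          refine ENNReal.tsum_le_tsum fun i => ?_
          by_cases hi : i ∈ F
          · simp only [hi, if_true]
            exact (hgi i).trans le_self_add
          · rw [Set.indicator_of_mem (by exact hi)]
            simp only [hi, if_false, Pi.zero_apply, sub_zero]
            exact le_add_self
      _ ≤ ε / 2 + ε / 2 := by
          rw [ENNReal.tsum_add]; exact add_le_add hδs.le hc.le
      _ = ε := ENNReal.add_halves ε

lemma mem_simple {ρ : I → ℝ → ℝ} (hρ : IsWeight ρ)
    {g : I → ℝ → ℝ} (F : Finset I) (hg0 : ∀ i ∉ F, ∀ s, g i s = 0) (hgc : ∀ i, Continuous (g i))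
    (B : I → ℝ) (hB : ∀ i s, ‖g i s‖ ≤ B i) : memLprho ρ 1 g := by
  rw [mem_iff]
  refine ⟨fun i => (hgc i).aemeasurable, ?_⟩
  unfold N1
  rw [tsum_eq_sum (s := F)]
  · refine ENNReal.sum_lt_top.2 fun i _ => ?_
    calc _ ≤ ∫⁻ s, ENNReal.ofReal (B i) * ENNReal.ofReal (ρ i s) ∂mu01 := by
          refine lintegral_mono fun s => ?_
          simp only
          gcongr
          rw [← ofReal_norm]
          exact ENNReal.ofReal_le_ofReal (hB i s)
      _ < ⊤ := by
          rw [lintegral_const_mul'' _ (hρ.aem i)]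
          exact ENNReal.mul_lt_top ENNReal.ofReal_lt_top (hρ.lint i)
  · intro i hi
    simp [hg0 i hi]

lemma const_le {M w h a : ℝ} (hM : 1 ≤ M) (h0 : 0 ≤ h) (h1 : h ≤ a) :
    ENNReal.ofReal (M * Real.exp (w * h)) ≤ ENNReal.ofReal (M * Real.exp (|w| * a)) := by
  apply ENNReal.ofReal_le_ofReal
  have : w * h ≤ |w| * a :=
    (mul_le_mul_of_nonneg_right (le_abs_self w) h0).trans (mul_le_mul_of_nonneg_left h1 (abs_nonneg w))
  gcongr

lemma bound_sub [Countable I] {P : I → Option I} {ρ : I → ℝ → ℝ} (hρ : IsWeight ρ) {M w t : ℝ}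
    (ht : 0 ≤ t) (hc : Cond P ρ M w t) {f g : I → ℝ → ℝ}
    (hf : memLprho ρ 1 f) (hg : memLprho ρ 1 g) :
    N1 ρ (fun i s => Tleft P f t i s - Tleft P g t i s) ≤
      ENNReal.ofReal (M * Real.exp (w * t)) * N1 ρ (fun i s => f i s - g i s) := by
  rw [N1_congr (fun i => (T_sub hρ ht hc hf hg i).mono fun s hs => hs.symm)]
  exact bound_T hρ ht hc ((mem_iff _ _).1 (mem_sub hρ hf hg)).1

lemma cont_zero [Countable I] {P : I → Option I} {ρ : I → ℝ → ℝ} (hρ : IsWeight ρ) {M w : ℝ}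
    (hM : 1 ≤ M) (hc : ∀ t, 0 ≤ t → Cond P ρ M w t) {f : I → ℝ → ℝ} (hf : memLprho ρ 1 f) :
    Tendsto (fun h => N1 ρ (fun i s => Tleft P f h i s - f i s))
      (nhdsWithin 0 (Set.Ici 0)) (nhds 0) := by
  rw [ENNReal.tendsto_nhds_zero]
  intro ε hε
  set K := ENNReal.ofReal (M * Real.exp (|w| * 1)) with hK
  have hK1 : K + 1 ≠ ⊤ := by simp [hK]
  have hK0 : K + 1 ≠ 0 := by simp
  have hε2 : ε / 2 ≠ 0 := (ENNReal.half_pos hε.ne').ne'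
  obtain ⟨g, F, B, hg0, hgc, hgB, hga⟩ := approx hρ hf (ε := ε / 2 / (K + 1))
    (ENNReal.div_ne_zero.2 ⟨hε2, hK1⟩)
  have hgm := mem_simple hρ F hg0 hgc B hgB
  have h1 := ENNReal.tendsto_nhds_zero.1 (cont_simple (P := P) hρ F hg0 hgc B hgB) (ε / 2)
    (pos_iff_ne_zero.2 hε2)
  filter_upwards [h1, self_mem_nhdsWithin, mem_nhdsWithin_of_mem_nhds (Iio_mem_nhds one_pos)]
      with h hh h0 hl
  have hcc := hc h h0
  have hTf := ((mem_iff _ _).1 (mem_T hρ h0 hcc hf)).1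
  have hTg := ((mem_iff _ _).1 (mem_T hρ h0 hcc hgm)).1
  have hgm' := ((mem_iff _ _).1 hgm).1
  set A := N1 ρ (fun i s => f i s - g i s)
  calc N1 ρ (fun i s => Tleft P f h i s - f i s)
      ≤ N1 ρ (fun i s => Tleft P f h i s - Tleft P g h i s) +
        N1 ρ (fun i s => Tleft P g h i s - f i s) :=
        N1_add_le hρ (fun i => (hTf i).sub (hTg i)) (fun i s => by ring)
    _ ≤ K * A + (N1 ρ (fun i s => Tleft P g h i s - g i s) + N1 ρ (fun i s => g i s - f i s)) := by
        gcongr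
        · refine (bound_sub hρ h0 hcc hf hgm).trans ?_
          gcongr
          exact const_le hM h0 (le_of_lt hl)
        · exact N1_add_le hρ (fun i => (hTg i).sub (hgm' i)) (fun i s => by ring)
    _ ≤ K * A + (ε / 2 + A) := by
        rw [N1_sub_comm ρ g f]
        gcongr
    _ = (K + 1) * A + ε / 2 := by ring
    _ ≤ (K + 1) * (ε / 2 / (K + 1)) + ε / 2 := by gcongr
    _ = ε := by
        rw [ENNReal.mul_div_cancel hK0 hK1, ENNReal.add_halves]

lemma cont_all [Countable I] {P : I → Option I} {ρ : I → ℝ → ℝ} (hρ : IsWeight ρ) {M w : ℝ}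
    (hM : 1 ≤ M) (hc : ∀ t, 0 ≤ t → Cond P ρ M w t) {f : I → ℝ → ℝ} (hf : memLprho ρ 1 f)
    {t : ℝ} (ht : 0 ≤ t) :
    Tendsto (fun u => N1 ρ (fun i s => Tleft P f u i s - Tleft P f t i s))
      (nhdsWithin t (Set.Ici 0)) (nhds 0) := by
  set K := ENNReal.ofReal (M * Real.exp (|w| * t)) with hK
  have h0 := cont_zero (P := P) hρ hM hc hf
  have h1 : Tendsto (fun u : ℝ => |u - t|) (nhdsWithin t (Set.Ici 0)) (nhdsWithin 0 (Set.Ici 0)) := by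
    refine tendsto_nhdsWithin_iff.2 ⟨?_, Eventually.of_forall fun u => Set.mem_Ici.2 (abs_nonneg _)⟩
    have : Continuous (fun u : ℝ => |u - t|) := by fun_prop
    have := this.tendsto t
    simp only [sub_self, abs_zero] at this
    exact this.mono_left nhdsWithin_le_nhds
  have h2 := ENNReal.Tendsto.const_mul (a := K) (h0.comp h1) (Or.inr ENNReal.ofReal_ne_top)
  rw [mul_zero] at h2
  refine tendsto_of_tendsto_of_tendsto_of_le_of_le' tendsto_const_nhds h2
    (Eventually.of_forall fun _ => zero_le) ?_
  filter_upwards [self_mem_nhdsWithin] with u hu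
  have hu : 0 ≤ u := hu
  simp only [Function.comp]
  have key : ∀ a b : ℝ, 0 ≤ a → 0 ≤ b → a ≤ t →
      N1 ρ (fun i s => Tleft P f (a + b) i s - Tleft P f a i s) ≤
        K * N1 ρ (fun i s => Tleft P f b i s - f i s) := by
    intro a b ha hb hat
    rw [N1_congr (g := fun i s => Tleft P (Tleft P f b) a i s - Tleft P f a i s)
      (fun i => (T_add hρ ha hb (hc _ (by positivity)) hf i).mono fun s hs => by rw [hs])]
    refine (bound_sub hρ ha (hc a ha) (mem_T hρ hb (hc b hb) hf) hf).trans ?_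
    gcongr
    exact const_le hM ha hat
  rcases le_total t u with h | h
  · have := key t (u - t) ht (by linarith) le_rfl
    rw [abs_of_nonneg (by linarith)]
    simpa using this
  · have := key u (t - u) hu (by linarith) h
    rw [abs_of_nonpos (by linarith), N1_sub_comm]
    simpa using this

lemma necess [Countable I] {P : I → Option I} {ρ : I → ℝ → ℝ} (hρ : IsWeight ρ) {M w t : ℝ}
    (hM : 1 ≤ M) (ht : 0 ≤ t)
    (hb : ∀ f, memLprho ρ 1 f →
      N1 ρ (Tleft P f t) ≤ ENNReal.ofReal (M * Real.exp (w * t)) * N1 ρ f) : Cond P ρ M w t := by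
  classical
  intro i
  set C := ENNReal.ofReal (M * Real.exp (w * t)) with hC
  have hC0 : C ≠ 0 := by
    have : 0 < M * Real.exp (w * t) := by positivity
    simpa [hC] using this
  have hE : ∀ j, MeasurableSet {s : ℝ | j ∈ Mset P (nfl t s) i} := fun j =>
    measurable_nfl t (MeasurableSet.of_discrete (s := {n | j ∈ Mset P n i}))
  have key : ∀ j, ∀ᵐ s ∂mu01,
      {s : ℝ | j ∈ Mset P (nfl t s) i}.indicator (fun s => ENNReal.ofReal (ρ i s)) s ≤
        C * ENNReal.ofReal (ρ j (Int.fract (t + s))) := by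
    intro j
    have hRj : AEMeasurable (fun s => ENNReal.ofReal (ρ j (Int.fract (t + s)))) mu01 :=
      (hρ.aem j).comp_quasiMeasurePreserving (fract_mp t).quasiMeasurePreserving
    refine ae_le_of_forall_setLIntegral_le_of_sigmaFinite₀ ((hρ.aem i).indicator (hE j)) ?_
    intro A hA _
    let B : Set ℝ := (fun r => Int.fract (-t + r)) ⁻¹' A
    have hBm : MeasurableSet B := (fract_mp (-t)).measurable hA
    have hBA : ∀ s ∈ Set.Ico (0 : ℝ) 1, (Int.fract (t + s) ∈ B ↔ s ∈ A) := by
      intro s hs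
      have : Int.fract (-t + Int.fract (t + s)) = s := by
        rw [← Int.fract_eq_self.2 ⟨hs.1, hs.2⟩, Int.fract_eq_fract]
        rw [Int.fract_eq_self.2 ⟨hs.1, hs.2⟩]
        refine ⟨-⌊t + s⌋, ?_⟩
        rw [Int.fract]; push_cast; ring
      simp only [B, Set.mem_preimage, this]
    let f : I → ℝ → ℝ := fun k s => if k = j then B.indicator 1 s else 0
    have hNf : N1 ρ f = ∫⁻ s, B.indicator 1 s * ENNReal.ofReal (ρ j s) ∂mu01 := by
      unfold N1
      rw [tsum_eq_single j]
      · congr 1; ext s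
        by_cases h : s ∈ B <;> simp [f, h]
      · intro k hk; simp [f, hk]
    have hfm : memLprho ρ 1 f := by
      rw [mem_iff]
      constructor
      · intro k
        by_cases hk : k = j
        · simp only [f, hk, if_true]
          exact (measurable_one.indicator hBm).aemeasurable
        · simp only [f, hk, if_false]; exact aemeasurable_const
      · rw [hNf]
        refine lt_of_le_of_lt (lintegral_mono fun s => ?_) (hρ.lint j)
        by_cases h : s ∈ B <;> simp [h]
    have h1 := (ENNReal.le_tsum i).trans (hb f hfm)
    have hT : ∀ s, Tleft P f t i s = trm P f t i s j := by
      intro s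
      rw [Tleft_eq, tsum_eq_single j]
      intro k hk
      unfold trm
      rw [Set.indicator_apply_eq_zero]
      intro _; simp [f, hk]
    calc ∫⁻ s in A, {s : ℝ | j ∈ Mset P (nfl t s) i}.indicator (fun s => ENNReal.ofReal (ρ i s)) s ∂mu01
        = ∫⁻ s, ‖Tleft P f t i s‖ₑ * ENNReal.ofReal (ρ i s) ∂mu01 := by
          rw [← lintegral_indicator hA]
          refine lintegral_congr_ae ?_
          filter_upwards [ae_Ico] with s hs
          rw [hT]
          unfold trm
          rw [nfl_cast (by linarith [hs.1])]
          have := hBA s hs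
          by_cases h1 : j ∈ Mset P (nfl t s) i <;> by_cases h2 : s ∈ A <;>
            simp [h1, h2, f, Set.indicator, this]
      _ ≤ C * N1 ρ f := h1
      _ = C * ∫⁻ s, B.indicator 1 (Int.fract (t + s)) * ENNReal.ofReal (ρ j (Int.fract (t + s))) ∂mu01 := by
          rw [hNf]
          have hm : AEMeasurable (fun s => B.indicator (1 : ℝ → ℝ≥0∞) s * ENNReal.ofReal (ρ j s)) mu01 :=
            (measurable_one.indicator hBm).aemeasurable.mul (hρ.aem j)
          congr 1
          conv_lhs => rw [← (fract_mp t).map_eq]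
          rw [lintegral_map' _ (fract_mp t).aemeasurable]
          rw [(fract_mp t).map_eq]; exact hm
      _ = C * ∫⁻ s in A, ENNReal.ofReal (ρ j (Int.fract (t + s))) ∂mu01 := by
          congr 1
          rw [← lintegral_indicator hA]
          refine lintegral_congr_ae ?_
          filter_upwards [ae_Ico] with s hs
          have := hBA s hs
          by_cases h2 : s ∈ A <;> simp [h2, Set.indicator, this]
      _ = ∫⁻ s in A, C * ENNReal.ofReal (ρ j (Int.fract (t + s))) ∂mu01 :=
          (lintegral_const_mul'' _ hRj.restrict).symm
  filter_upwards [ae_all_iff.2 key, ae_Ico] with s hs hI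
  rw [ENNReal.mul_iInf_of_ne hC0 ENNReal.ofReal_ne_top]
  refine le_iInf fun j => ?_
  have := hs j
  rw [Set.indicator_of_mem (by exact j.2), ← nfl_cast (by linarith [hI.1]), add_comm t s] at this
  exact this

/-- **Proposition 2.2 (a)**.  Let `ρ` be a weight on the directed metric tree `L(G)`,
`M ≥ 1`, `w ∈ ℝ`, and `p = 1`.  The left translations `{T_t}_{t ≥ 0}` form a `C₀`-semigroup
of bounded operators on `L^1_ρ(L(G))` with `‖T_t‖ ≤ M e^{wt}` for all `t ≥ 0` if and only if
for all `i ∈ I`, all `t ≥ 0` and almost every `s ∈ [0,1]`,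
`ρ_i(s) ≤ M e^{wt} inf_{j ∈ M_{n(t,s)}(i)} ρ_j(s + t - n(t,s))`
(the infimum over the empty set being `+∞`). -/
theorem c0SemigroupBound_iff_weight_L1 {I : Type*} [Countable I] [Nonempty I]
    (P : I → Option I) (ρ : I → ℝ → ℝ) (hρ : IsWeight ρ) (M w : ℝ) (hM : 1 ≤ M) :
    C0SemigroupBound P ρ 1 M w ↔
      ∀ i, ∀ t ≥ (0 : ℝ), ∀ᵐ s ∂(volume.restrict (Set.Icc (0 : ℝ) 1)),
        ENNReal.ofReal (ρ i s) ≤ ENNReal.ofReal (M * Real.exp (w * t)) *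
          ⨅ j : Mset P (nfl t s) i, ENNReal.ofReal (ρ (j : I) (s + t - (nfl t s : ℝ))) := by
  constructor
  · rintro ⟨_, h2, _⟩ i t ht
    refine necess hρ hM ht (fun f hf => ?_) i
    have := h2 t ht f hf
    rwa [enorm'_eq, enorm'_eq] at this
  · intro h
    have hc : ∀ t, 0 ≤ t → Cond P ρ M w t := fun t ht i => h i t ht
    refine ⟨fun t ht f hf => mem_T hρ ht (hc t ht) hf, fun t ht f hf => ?_, fun f hf => ?_,
      fun t ht u hu f hf => ?_, fun f hf t ht => ?_⟩
    · rw [enorm'_eq, enorm'_eq]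
      exact bound_T hρ ht (hc t ht) ((mem_iff _ _).1 hf).1
    · rw [pdist_eq]
      exact N1_zero fun i => (T_zero P f i).mono fun s hs => sub_eq_zero.2 hs
    · rw [pdist_eq]
      exact N1_zero fun i => (T_add hρ ht hu (hc _ (add_nonneg ht hu)) hf i).mono
        fun s hs => sub_eq_zero.2 hs
    · simp only [pdist_eq]
      exact cont_all hρ hM hc hf ht

end
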